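/- arXiv:1308.0454 — 2 statements merged into one kernel-verified Lean document; each statement's English description precedes it below -/
import Mathlib

section
/- Let W be a signed tropical m×(n+1) matrix and let x ∈ ℝ^{n+1}. If the tangent graph G_x(W) contains a cycle (in the underlying undirected graph), then W has a square submatrix W' such that tper(|W'|) > −∞ and |W'| is tropically singular. In particular, if W is tropically generic then G_x(W) is a forest. -/
open scoped Classical

noncomputable section

/-- The tropical semiring `ℝ ∪ {−∞}` with max as addition, + as multiplication. -/
abbrev TT : Type := WithBot ℝ

/-- Tropical dot product `max_j (a j + x j)`. -/
def tdot {n : ℕ} (a x : Fin n → TT) : TT :=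
  Finset.univ.sup fun j => a j + x j

/-- Tropical permanent of a square matrix over `TT`. -/
def tper {q : ℕ} (M : Fin q → Fin q → TT) : TT :=
  Finset.univ.sup fun σ : Equiv.Perm (Fin q) => ∑ i, M i (σ i)

/-- A square tropical matrix is tropically singular. -/
def TropSingular {q : ℕ} (M : Fin q → Fin q → TT) : Prop :=
  tper M = ⊥ ∨ ∃ σ π : Equiv.Perm (Fin q), σ ≠ π ∧
    (∑ i, M i (σ i)) = tper M ∧ (∑ i, M i (π i)) = tper M

/-- An (unsigned) tropical matrix is tropically generic. -/
def TropGeneric {m n : ℕ} (M : Fin m → Fin n → TT) : Prop :=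
  ∀ (q : ℕ) (r : Fin q → Fin m) (c : Fin q → Fin n),
    Function.Injective r → Function.Injective c →
    tper (fun i j => M (r i) (c j)) = ⊥ ∨ ¬ TropSingular (fun i j => M (r i) (c j))

/-- sign of an entry of a signed tropical matrix. -/
def esign (ap an : TT) : ℤ :=
  if ap ≠ ⊥ then 1 else if an ≠ ⊥ then -1 else 0

/-- A signed square tropical matrix (pair of matrices) is tropically sign singular. -/
def TropSignSingular {q : ℕ} (Mp Mn : Fin q → Fin q → TT) : Prop :=
  tper (fun i j => max (Mp i j) (Mn i j)) = ⊥ ∨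
  ∃ σ π : Equiv.Perm (Fin q),
    (∑ i, max (Mp i (σ i)) (Mn i (σ i))) = tper (fun i j => max (Mp i j) (Mn i j)) ∧
    (∑ i, max (Mp i (π i)) (Mn i (π i))) = tper (fun i j => max (Mp i j) (Mn i j)) ∧
    ((Equiv.Perm.sign σ : ℤ) * ∏ i, esign (Mp i (σ i)) (Mn i (σ i)))
      ≠ ((Equiv.Perm.sign π : ℤ) * ∏ i, esign (Mp i (π i)) (Mn i (π i)))

/-- A signed tropical matrix is tropically sign generic. -/
def TropSignGeneric {m n : ℕ} (Mp Mn : Fin m → Fin n → TT) : Prop :=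
  ∀ (q : ℕ) (r : Fin q → Fin m) (c : Fin q → Fin n),
    Function.Injective r → Function.Injective c →
    tper (fun i j => max (Mp (r i) (c j)) (Mn (r i) (c j))) = ⊥ ∨
    ¬ TropSignSingular (fun i j => Mp (r i) (c j)) (fun i j => Mn (r i) (c j))

/-- Tropical polyhedron `P(A,b)` given by a signed matrix/vector. -/
def tropP {m n : ℕ} (Ap An : Fin m → Fin n → TT) (bp bn : Fin m → TT) :
    Set (Fin n → TT) :=
  {x | ∀ i, max (tdot (An i) x) (bn i) ≤ max (tdot (Ap i) x) (bp i)}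


section Tangent

variable {m n : ℕ} (Wp Wn : Fin m → Fin (n + 1) → TT)

/-- Real vector viewed inside `T^{n+1}`. -/
def toT (x : Fin (n + 1) → ℝ) : Fin (n + 1) → TT := fun j => (x j : TT)

/-- Modulus of the signed matrix `W`. -/
def tmod : Fin m → Fin (n + 1) → TT := fun i j => max (Wp i j) (Wn i j)

/-- `i` is a hyperplane node of the tangent graph at `x`. -/
def isHypNode (x : Fin (n + 1) → ℝ) (i : Fin m) : Prop :=
  tdot (Wp i) (toT x) = tdot (Wn i) (toT x) ∧ ⊥ < tdot (Wp i) (toT x)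

/-- There is an edge between hyperplane node `i` and coordinate node `j`
in the tangent graph at `x`. -/
def isTEdge (x : Fin (n + 1) → ℝ) (i : Fin m) (j : Fin (n + 1)) : Prop :=
  isHypNode Wp Wn x i ∧ tmod Wp Wn i j + (x j : TT) = tdot (tmod Wp Wn i) (toT x)

/-- Vertices of the tangent (di)graph: hyperplane nodes on the left,
coordinate nodes on the right. -/
abbrev TGV (m n : ℕ) : Type := Sum (Fin m) (Fin (n + 1))

/-- The (undirected) tangent graph at `x`. -/
def tangentGraph (x : Fin (n + 1) → ℝ) : SimpleGraph (TGV m n) :=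
  SimpleGraph.fromRel fun u v =>
    match u, v with
    | Sum.inl i, Sum.inr j => isTEdge Wp Wn x i j
    | _, _ => False

/-- The arc relation of the tangent digraph at `x`: the edge between `i` and
`j` is directed from `j` to `i` when `W_{ij}` is tropically positive, and from
`i` to `j` when it is tropically negative. -/
def arcRel (x : Fin (n + 1) → ℝ) : TGV m n → TGV m n → Prop := fun u v =>
  match u, v with
  | Sum.inr j, Sum.inl i => isTEdge Wp Wn x i j ∧ Wp i j ≠ ⊥
  | Sum.inl i, Sum.inr j => isTEdge Wp Wn x i j ∧ Wn i j ≠ ⊥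
  | _, _ => False

end Tangent


/-!
A cycle in a bipartite graph splits into two distinct perfect matchings between the rows and the
columns that it visits. Along an edge `(i, j)` of the tangent graph at `x`, the entry of `|W|` is
finite and `|W|_{ij} + x_j` is the maximum of row `i`, so both matchings attain the maximum in
every row of the visited square submatrix after its columns have been shifted by `x`. A column
shift adds the same constant `∑ x_j` to the weight of every permutation, hence both matchings attain
the tropical permanent of the submatrix, which is therefore finite and attained twice.
-/

section Tight

variable {Γ ι κ : Type*}

/-- The entry `(i, j)` of the tropical matrix `M` is tight at the finite vector `x` if it is finite
and `M i j + x j` is the maximum of `M i l + x l` over all columns `l`. These are the entries that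
can carry an edge of the tangent graph; the coefficients may lie in any `Γ ∪ {−∞}`. -/
def IsTight [Add Γ] [LE Γ] (M : ι → κ → WithBot Γ) (x : κ → Γ) (i : ι) (j : κ) : Prop :=
  M i j ≠ ⊥ ∧ ∀ l, M i l + x l ≤ M i j + x j

lemma IsTight.submatrix [Add Γ] [LE Γ] {ι' κ' : Type*} {M : ι → κ → WithBot Γ} {x : κ → Γ}
    {r : ι' → ι} {c : κ' → κ} {a : ι'} {b : κ'} (h : IsTight M x (r a) (c b)) :
    IsTight (fun a b => M (r a) (c b)) (x ∘ c) a b :=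
  ⟨h.1, fun l => h.2 (c l)⟩

lemma IsTight.sum_perm_le [AddCommMonoid Γ] [PartialOrder Γ] [IsOrderedCancelAddMonoid Γ]
    [Fintype ι] {M : ι → ι → WithBot Γ} {x : ι → Γ} {σ : Equiv.Perm ι}
    (hσ : ∀ i, IsTight M x i (σ i)) (τ : Equiv.Perm ι) :
    ∑ i, M i (τ i) ≤ ∑ i, M i (σ i) := by
  have sum_shift (π : Equiv.Perm ι) :
      ∑ i, (M i (π i) + x (π i)) = ∑ i, M i (π i) + ((∑ i, x i : Γ) : WithBot Γ) := by
    rw [Finset.sum_add_distrib, Equiv.sum_comp π fun j => (x j : WithBot Γ), WithBot.coe_sum]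
  have shifted_le : ∑ i, (M i (τ i) + x (τ i)) ≤ ∑ i, (M i (σ i) + x (σ i)) :=
    Finset.sum_le_sum fun i _ => (hσ i).2 (τ i)
  rw [sum_shift, sum_shift] at shifted_le
  exact WithBot.le_of_add_le_add_right WithBot.coe_ne_bot shifted_le

end Tight

section Permanent

variable {q : ℕ} {M : Fin q → Fin q → TT} {x : Fin q → ℝ} {σ π : Equiv.Perm (Fin q)}

lemma sum_perm_le_tper (M : Fin q → Fin q → TT) (σ : Equiv.Perm (Fin q)) :
    ∑ i, M i (σ i) ≤ tper M :=
  Finset.le_sup (f := fun σ : Equiv.Perm (Fin q) => ∑ i, M i (σ i)) (Finset.mem_univ σ)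

lemma IsTight.sum_perm_eq_tper (hσ : ∀ i, IsTight M x i (σ i)) : ∑ i, M i (σ i) = tper M :=
  (sum_perm_le_tper M σ).antisymm (Finset.sup_le fun τ _ => IsTight.sum_perm_le hσ τ)

lemma IsTight.bot_lt_tper (hσ : ∀ i, IsTight M x i (σ i)) : ⊥ < tper M :=
  (WithBot.bot_lt_sum_iff.2 fun i _ => bot_lt_iff_ne_bot.2 (hσ i).1).trans_le
    (sum_perm_le_tper M σ)

lemma IsTight.tropSingular (hne : σ ≠ π) (hσ : ∀ i, IsTight M x i (σ i))
    (hπ : ∀ i, IsTight M x i (π i)) : TropSingular M :=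
  Or.inr ⟨σ, π, hne, IsTight.sum_perm_eq_tper hσ, IsTight.sum_perm_eq_tper hπ⟩

lemma not_tropGeneric_iff {m n : ℕ} {M : Fin m → Fin n → TT} :
    ¬ TropGeneric M ↔ ∃ (q : ℕ) (r : Fin q → Fin m) (c : Fin q → Fin n),
      Function.Injective r ∧ Function.Injective c ∧
      ⊥ < tper (fun a b => M (r a) (c b)) ∧ TropSingular (fun a b => M (r a) (c b)) := by
  simp [TropGeneric, bot_lt_iff_ne_bot]

end Permanent

section BipartiteCycle

variable {α β : Type*} {G : SimpleGraph (α ⊕ β)}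

lemma even_length_iff_isRight_eq (hG : G ≤ completeBipartiteGraph α β) {u v : α ⊕ β}
    (w : G.Walk u v) : Even w.length ↔ u.isRight = v.isRight := by
  rw [← w.length_mapLe hG, Bool.eq_iff_iff]
  exact (SimpleGraph.CompleteBipartiteGraph.bicoloring α β).even_length_iff_congr (w.mapLe hG)

lemma isRight_getVert_iff_even (hG : G ≤ completeBipartiteGraph α β) {j : β} {v : α ⊕ β}
    (w : G.Walk (Sum.inr j) v) {k : ℕ} (hk : k ≤ w.length) :
    (w.getVert k).isRight ↔ Even k := by
  have h := even_length_iff_isRight_eq hG (w.take k)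
  rw [w.take_length, min_eq_left hk, Sum.isRight_inr] at h
  rw [h, eq_comm]

lemma exists_isCycle_inr (hG : G ≤ completeBipartiteGraph α β) (hcyc : ¬ G.IsAcyclic) :
    ∃ (j : β) (w : G.Walk (Sum.inr j) (Sum.inr j)), w.IsCycle := by
  simp only [SimpleGraph.IsAcyclic, not_forall, not_not] at hcyc
  obtain ⟨i | j, w, hw⟩ := hcyc
  · have hadj := hG (w.adj_snd hw.not_nil)
    obtain ⟨j, hj⟩ : ∃ j, w.snd = Sum.inr j := by simpa [Sum.isRight_iff] using hadj
    have hmem : Sum.inr j ∈ w.support := hj ▸ w.getVert_mem_support 1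
    exact ⟨j, w.rotate _ hmem, hw.rotate hmem⟩
  · exact ⟨j, w, hw⟩

lemma getVert_two_mul_finRotate {V : Type*} {H : SimpleGraph V} {v : V} (w : H.Walk v v) {q : ℕ}
    (hw : w.length = 2 * (q + 1)) (a : Fin (q + 1)) :
    w.getVert (2 * finRotate (q + 1) a) = w.getVert (2 * a + 2) := by
  rw [coe_finRotate]
  split_ifs with ha
  · rw [mul_zero, w.getVert_zero, ha, Fin.val_last, ← mul_add_one, ← hw, w.getVert_length]
  · rw [mul_add_one]

lemma exists_two_matchings_of_not_isAcyclic (hG : G ≤ completeBipartiteGraph α β)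
    (hcyc : ¬ G.IsAcyclic) :
    ∃ (q : ℕ) (r : Fin q → α) (c : Fin q → β) (σ : Equiv.Perm (Fin q)),
      Function.Injective r ∧ Function.Injective c ∧ σ ≠ 1 ∧
      (∀ a, G.Adj (Sum.inl (r a)) (Sum.inr (c a))) ∧
      ∀ a, G.Adj (Sum.inl (r a)) (Sum.inr (c (σ a))) := by
  obtain ⟨j, w, hw⟩ := exists_isCycle_inr hG hcyc
  obtain ⟨q, hq⟩ : ∃ q, w.length = 2 * (q + 2) := by
    have := hw.three_le_length
    obtain ⟨k, hk⟩ := (even_length_iff_isRight_eq hG w).2 rfl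
    exact ⟨k - 2, by omega⟩
  have col_vertex (a : Fin (q + 2)) : ∃ y, w.getVert (2 * a) = Sum.inr y :=
    Sum.isRight_iff.1 <| (isRight_getVert_iff_even hG w (by omega)).2 (even_two_mul _)
  have row_vertex (a : Fin (q + 2)) : ∃ x, w.getVert (2 * a + 1) = Sum.inl x := by
    rw [← Sum.isLeft_iff, ← Sum.not_isRight, isRight_getVert_iff_even hG w (by omega)]
    exact Nat.not_even_two_mul_add_one _
  have getVert_inj {k l : ℕ} (hk : k < w.length) (hl : l < w.length)
      (h : w.getVert k = w.getVert l) : k = l :=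
    hw.getVert_injOn' (Nat.le_sub_one_of_lt hk) (Nat.le_sub_one_of_lt hl) h
  choose c hc using col_vertex
  choose r hr using row_vertex
  refine ⟨q + 2, r, c, finRotate (q + 2), fun a b hab => ?_, fun a b hab => ?_,
    isCycle_finRotate.ne_one, fun a => ?_, fun a => ?_⟩
  · have := getVert_inj (by omega) (by omega) ((hr a).trans (hab ▸ (hr b).symm))
    omega
  · have := getVert_inj (by omega) (by omega) ((hc a).trans (hab ▸ (hc b).symm))
    omega
  · rw [← hr, ← hc]
    exact (w.adj_getVert_succ (by omega)).symm
  · rw [← hr, ← hc, getVert_two_mul_finRotate w hq]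
    exact w.adj_getVert_succ (by omega)

end BipartiteCycle

lemma exists_tropSingular_submatrix_of_not_isAcyclic {m n : ℕ} {M : Fin m → Fin n → TT}
    {x : Fin n → ℝ} {G : SimpleGraph (Fin m ⊕ Fin n)} (hG : G ≤ completeBipartiteGraph _ _)
    (htight : ∀ i j, G.Adj (Sum.inl i) (Sum.inr j) → IsTight M x i j) (hcyc : ¬ G.IsAcyclic) :
    ∃ (q : ℕ) (r : Fin q → Fin m) (c : Fin q → Fin n),
      Function.Injective r ∧ Function.Injective c ∧
      ⊥ < tper (fun a b => M (r a) (c b)) ∧ TropSingular (fun a b => M (r a) (c b)) := by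
  obtain ⟨q, r, c, σ, hr, hc, hσ, hid_adj, hσ_adj⟩ := exists_two_matchings_of_not_isAcyclic hG hcyc
  have id_tight (a : Fin q) : IsTight (fun a b => M (r a) (c b)) (x ∘ c) a a :=
    (htight _ _ (hid_adj a)).submatrix
  have σ_tight (a : Fin q) : IsTight (fun a b => M (r a) (c b)) (x ∘ c) a (σ a) :=
    (htight _ _ (hσ_adj a)).submatrix
  exact ⟨q, r, c, hr, hc, IsTight.bot_lt_tper σ_tight, IsTight.tropSingular hσ σ_tight id_tight⟩

section TangentGraph

variable {m n : ℕ} {Wp Wn : Fin m → Fin (n + 1) → TT} {x : Fin (n + 1) → ℝ}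

lemma tangentGraph_le_completeBipartiteGraph :
    tangentGraph Wp Wn x ≤ completeBipartiteGraph (Fin m) (Fin (n + 1)) := by
  rintro (i | j) (i' | j') h <;> simp_all [tangentGraph]

lemma tangentGraph_adj_inl_inr {i : Fin m} {j : Fin (n + 1)} :
    (tangentGraph Wp Wn x).Adj (Sum.inl i) (Sum.inr j) ↔ isTEdge Wp Wn x i j := by
  simp [tangentGraph]

lemma isHypNode.bot_lt_tdot_tmod {i : Fin m} (h : isHypNode Wp Wn x i) :
    ⊥ < tdot (tmod Wp Wn i) (toT x) :=
  h.2.trans_le <| Finset.sup_mono_fun fun _ _ => add_le_add_left (le_max_left _ _) _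

lemma isTEdge.isTight {i : Fin m} {j : Fin (n + 1)} (h : isTEdge Wp Wn x i j) :
    IsTight (tmod Wp Wn) x i j := by
  obtain ⟨hnode, hmax⟩ := h
  refine ⟨fun hbot => ?_, fun l => ?_⟩
  · rw [hbot, WithBot.bot_add] at hmax
    exact hnode.bot_lt_tdot_tmod.ne hmax
  · rw [hmax]
    exact Finset.le_sup (f := fun l => tmod Wp Wn i l + toT x l) (Finset.mem_univ l)

end TangentGraph

/-- If the tangent graph at a finite point contains an
(undirected) cycle, then `W` has a square submatrix `W'` with
`tper(|W'|) > −∞` and `|W'|` tropically singular. In particular, if `W` is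
tropically generic then the tangent graph is a forest. -/
theorem stmt3 {m n : ℕ} (Wp Wn : Fin m → Fin (n + 1) → TT)
    (hsign : ∀ i j, min (Wp i j) (Wn i j) = ⊥)
    (x : Fin (n + 1) → ℝ) :
    (¬ (tangentGraph Wp Wn x).IsAcyclic →
      ∃ (q : ℕ) (r : Fin q → Fin m) (c : Fin q → Fin (n + 1)),
        Function.Injective r ∧ Function.Injective c ∧
        ⊥ < tper (fun a b => tmod Wp Wn (r a) (c b)) ∧
        TropSingular (fun a b => tmod Wp Wn (r a) (c b))) ∧
    (TropGeneric (tmod Wp Wn) → (tangentGraph Wp Wn x).IsAcyclic) := by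
  have singular_of_cycle := exists_tropSingular_submatrix_of_not_isAcyclic
    (tangentGraph_le_completeBipartiteGraph (Wp := Wp) (Wn := Wn) (x := x))
    fun _ _ hadj => (tangentGraph_adj_inl_inr.1 hadj).isTight
  exact ⟨singular_of_cycle, fun hgen =>
    by_contra fun hcyc => not_tropGeneric_iff.2 (singular_of_cycle hcyc) hgen⟩
end
end

section
/- Let W be a signed tropical m×(n+1) matrix whose i-th row has an entry different from −∞, let x ∈ ℝ^{n+1}, and let J ⊆ [n+1] with ∅ ⊊ J ⊊ [n+1]. Then: (i) if Wᵢ⁺⊙x > Wᵢ⁻⊙x, then every direction e^J is feasible from x in the half-space Hᵢ^≥; (ii) if Wᵢ⁺⊙x = Wᵢ⁻⊙x, then e^J is feasible from x in Hᵢ^≥ if and only if argmax_j(W⁺_{ij}+x_j) ∩ J ≠ ∅ or argmax_j(W⁻_{ij}+x_j) ∩ J = ∅; (iii) if Wᵢ⁺⊙x = Wᵢ⁻⊙x, then e^J is feasible from x in the s-hyperplane Hᵢ if and only if the sets argmax_j(W⁺_{ij}+x_j) ∩ J and argmax_j(W⁻_{ij}+x_j) ∩ J are both empty or both nonempty. 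-/
open scoped Classical

noncomputable section

section Pivot

variable {m n : ℕ}

/-- The tropical cone `C = {x : Wᵢ⁺⊙x ≥ Wᵢ⁻⊙x for all i}`. -/
def coneC (Wp Wn : Fin m → Fin (n + 1) → TT) : Set (Fin (n + 1) → TT) :=
  {x | ∀ i, tdot (Wn i) x ≤ tdot (Wp i) x}

/-- The `i`-th s-hyperplane `Hᵢ`. -/
def hypHS (Wp Wn : Fin m → Fin (n + 1) → TT) (i : Fin m) : Set (Fin (n + 1) → TT) :=
  {x | tdot (Wp i) x = tdot (Wn i) x}

/-- The `i`-th half-space `Hᵢ^≥`. -/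
def halfHS (Wp Wn : Fin m → Fin (n + 1) → TT) (i : Fin m) : Set (Fin (n + 1) → TT) :=
  {x | tdot (Wn i) x ≤ tdot (Wp i) x}

/-- The tropical edge `E_K = ⋂_{i ∈ K} Hᵢ ∩ C` (as a set). -/
def edgeEK (Wp Wn : Fin m → Fin (n + 1) → TT) (K : Finset (Fin m)) :
    Set (Fin (n + 1) → TT) :=
  {x | (∀ i ∈ K, x ∈ hypHS Wp Wn i) ∧ x ∈ coneC Wp Wn}

/-- Indicator vector `e^J` of `J ⊆ [n+1]`. -/
def eJ (J : Finset (Fin (n + 1))) : Fin (n + 1) → ℝ := fun j => if j ∈ J then 1 else 0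

/-- `e^J` (with `∅ ⊊ J ⊊ [n+1]`) is a feasible direction from `x` in `D`. -/
def Feasible (D : Set (Fin (n + 1) → TT)) (x : Fin (n + 1) → ℝ)
    (J : Finset (Fin (n + 1))) : Prop :=
  J ≠ ∅ ∧ J ≠ Finset.univ ∧
    ∃ μ : ℝ, 0 < μ ∧ ∀ lam : ℝ, 0 ≤ lam → lam ≤ μ → toT (x + lam • eJ J) ∈ D

/-- `{ξ + λ e^J : 0 ≤ λ ≤ μ}` is an ordinary segment of the tropical edge
`E_K`: it is contained in `E_K` and is maximal in the direction `e^J`. -/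
def IsOrdSeg (Wp Wn : Fin m → Fin (n + 1) → TT) (K : Finset (Fin m))
    (ξ : Fin (n + 1) → ℝ) (J : Finset (Fin (n + 1))) (μ : ℝ) : Prop :=
  0 < μ ∧ J ≠ ∅ ∧ J ≠ Finset.univ ∧
  (∀ lam : ℝ, 0 ≤ lam → lam ≤ μ → toT (ξ + lam • eJ J) ∈ edgeEK Wp Wn K) ∧
  (∀ ε : ℝ, 0 < ε → toT (ξ - ε • eJ J) ∉ edgeEK Wp Wn K) ∧
  (∀ ε : ℝ, 0 < ε → toT (ξ + (μ + ε) • eJ J) ∉ edgeEK Wp Wn K)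

/-- `x` is a breakpoint of `E_K`: an intermediate endpoint shared by two
consecutive ordinary segments. -/
def IsBreakpoint (Wp Wn : Fin m → Fin (n + 1) → TT) (K : Finset (Fin m))
    (x : Fin (n + 1) → ℝ) : Prop :=
  ∃ ξ J μ, IsOrdSeg Wp Wn K ξ J μ ∧ x = ξ + μ • eJ J ∧
    ∃ J' μ', IsOrdSeg Wp Wn K x J' μ' ∧ J ⊂ J'

/-- `x` lies in the relative interior of an ordinary segment of `E_K`. -/
def InRelIntSeg (Wp Wn : Fin m → Fin (n + 1) → TT) (K : Finset (Fin m))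
    (x : Fin (n + 1) → ℝ) : Prop :=
  ∃ ξ J μ, IsOrdSeg Wp Wn K ξ J μ ∧ ∃ lam : ℝ, 0 < lam ∧ lam < μ ∧ x = ξ + lam • eJ J

/-- Embedding of `TT = ℝ ∪ {−∞}` into `EReal`. -/
def tE : TT → EReal := WithBot.recBotCoe ⊥ (fun r => (r : EReal))

/-- `λ⁺_i(ξ,J) = (Wᵢ⁺⊙ξ) − max_{j∈J}(W⁺_{ij} + ξ_j)`, with `−(−∞) = +∞`. -/
def lamP (Wp : Fin m → Fin (n + 1) → TT) (i : Fin m) (ξ : Fin (n + 1) → ℝ)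
    (J : Finset (Fin (n + 1))) : EReal :=
  tE (tdot (Wp i) (toT ξ)) - tE (J.sup fun j => Wp i j + (ξ j : TT))

/-- `λ⁻_i(ξ,J) = (Wᵢ⁺⊙ξ) − max_{j∈J}(W⁻_{ij} + ξ_j)`, with `−(−∞) = +∞`. -/
def lamM (Wp Wn : Fin m → Fin (n + 1) → TT) (i : Fin m) (ξ : Fin (n + 1) → ℝ)
    (J : Finset (Fin (n + 1))) : EReal :=
  tE (tdot (Wp i) (toT ξ)) - tE (J.sup fun j => Wn i j + (ξ j : TT))

/-- `argmax(Wᵢ⁺⊙ξ)`. -/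
def argmaxP (Wp : Fin m → Fin (n + 1) → TT) (i : Fin m) (ξ : Fin (n + 1) → ℝ) :
    Set (Fin (n + 1)) :=
  {j | Wp i j + (ξ j : TT) = tdot (Wp i) (toT ξ)}

/-- `argmax(Wᵢ⁻⊙ξ)`. -/
def argmaxM (Wn : Fin m → Fin (n + 1) → TT) (i : Fin m) (ξ : Fin (n + 1) → ℝ) :
    Set (Fin (n + 1)) :=
  {j | Wn i j + (ξ j : TT) = tdot (Wn i) (toT ξ)}

/-- `Λ(ξ,J)`: candidate entering constraints. -/
def entSet (Wp : Fin m → Fin (n + 1) → TT) (K : Finset (Fin m))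
    (ξ : Fin (n + 1) → ℝ) (J : Finset (Fin (n + 1))) : Set (Fin m) :=
  {i | i ∉ K ∧ ∀ j ∈ J, j ∉ argmaxP Wp i ξ}

/-- `B(ξ,J)`: candidate breakpoint constraints. -/
def brkSet (Wp Wn : Fin m → Fin (n + 1) → TT) (K : Finset (Fin m))
    (ξ : Fin (n + 1) → ℝ) (J : Finset (Fin (n + 1))) : Set (Fin m) :=
  {i | i ∈ K ∧ (∀ j ∈ J, j ∉ argmaxP Wp i ξ) ∧ ∀ j ∈ J, j ∉ argmaxM Wn i ξ}

/-- Coordinate nodes with an arc into hyperplane node `i`. -/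
def degIn (Wp Wn : Fin m → Fin (n + 1) → TT) (x : Fin (n + 1) → ℝ) (i : Fin m) :
    Set (Fin (n + 1)) :=
  {j | arcRel Wp Wn x (Sum.inr j) (Sum.inl i)}

/-- Coordinate nodes with an arc out of hyperplane node `i`. -/
def degOut (Wp Wn : Fin m → Fin (n + 1) → TT) (x : Fin (n + 1) → ℝ) (i : Fin m) :
    Set (Fin (n + 1)) :=
  {j | arcRel Wp Wn x (Sum.inl i) (Sum.inr j)}

/-- Hyperplane node `i` has degree `(1,1)` in the tangent digraph at `x`. -/
def deg11 (Wp Wn : Fin m → Fin (n + 1) → TT) (x : Fin (n + 1) → ℝ) (i : Fin m) : Prop :=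
  (∃! j, j ∈ degIn Wp Wn x i) ∧ (∃! j, j ∈ degOut Wp Wn x i)

/-- Hyperplane node `i` has degree `(2,1)`. -/
def deg21 (Wp Wn : Fin m → Fin (n + 1) → TT) (x : Fin (n + 1) → ℝ) (i : Fin m) : Prop :=
  (degIn Wp Wn x i).ncard = 2 ∧ (∃! j, j ∈ degOut Wp Wn x i)

/-- Hyperplane node `i` has degree `(1,2)`. -/
def deg12 (Wp Wn : Fin m → Fin (n + 1) → TT) (x : Fin (n + 1) → ℝ) (i : Fin m) : Prop :=
  (∃! j, j ∈ degIn Wp Wn x i) ∧ (degOut Wp Wn x i).ncard = 2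

/-- The support of the tangent graph at `x`: all coordinate nodes together
with the hyperplane nodes. -/
def suppV (Wp Wn : Fin m → Fin (n + 1) → TT) (x : Fin (n + 1) → ℝ) : Set (TGV m n) :=
  {v | match v with
       | Sum.inl i => isHypNode Wp Wn x i
       | Sum.inr _ => True}

/-- The underlying undirected edge relation of the tangent graph. -/
def tedgeRel (Wp Wn : Fin m → Fin (n + 1) → TT) (x : Fin (n + 1) → ℝ) :
    TGV m n → TGV m n → Prop := fun u v =>
  match u, v with
  | Sum.inl i, Sum.inr j => isTEdge Wp Wn x i j
  | _, _ => False

/-- The tangent graph with the hyperplane node `ℓ` (and its incident edges)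
deleted. -/
def delNode (Wp Wn : Fin m → Fin (n + 1) → TT) (x : Fin (n + 1) → ℝ) (ℓ : Fin m) :
    SimpleGraph (TGV m n) :=
  SimpleGraph.fromRel fun u v =>
    tedgeRel Wp Wn x u v ∧ u ≠ Sum.inl ℓ ∧ v ≠ Sum.inl ℓ

/-- The tangent graph with the edge between hyperplane node `k` and coordinate
node `j` deleted. -/
def delEdge (Wp Wn : Fin m → Fin (n + 1) → TT) (x : Fin (n + 1) → ℝ) (k : Fin m)
    (j : Fin (n + 1)) : SimpleGraph (TGV m n) :=
  SimpleGraph.fromRel fun u v =>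
    tedgeRel Wp Wn x u v ∧ ¬(u = Sum.inl k ∧ v = Sum.inr j)

/-- Coordinate nodes weakly connected to hyperplane node `k` after deleting the
edge between `k` and `j`. -/
def reachJ (Wp Wn : Fin m → Fin (n + 1) → TT) (x : Fin (n + 1) → ℝ) (k : Fin m)
    (j : Fin (n + 1)) : Finset (Fin (n + 1)) :=
  Finset.univ.filter fun l => (delEdge Wp Wn x k j).Reachable (Sum.inl k) (Sum.inr l)

end Pivot

/-!
Along the ray `l ↦ x + l • e^J`, `l ≥ 0`, the function `a ⊙ ·` is affine near `l = 0`: its slope is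
`1` if `J` meets the set of maximizing indices (the maximal terms indexed by `J` lead all others),
and `0` otherwise (finitely many nonmaximal terms need a positive time to catch up). Starting from
a common finite value, `Wᵢ⁻ ⊙ ·` stays below `Wᵢ⁺ ⊙ ·` exactly when its slope is not larger. The
s-hyperplane is the intersection of two opposite half-spaces, which reduces its case to theirs.
-/

section

open Filter Topology

variable {m n : ℕ}

theorem eventually_add_coe_lt {u v : TT} (h : u < v) : ∀ᶠ l : ℝ in 𝓝 0, u + (l : TT) < v := by
  induction v using WithBot.recBotCoe with
  | bot => exact absurd h not_lt_bot
  | coe v =>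
    induction u using WithBot.recBotCoe with
    | bot => simp
    | coe u =>
      have hlim : Tendsto (fun l : ℝ => u + l) (𝓝 0) (𝓝 u) :=
        Continuous.tendsto' (by fun_prop) 0 u (add_zero u)
      exact_mod_cast hlim.eventually_lt_const (WithBot.coe_lt_coe.mp h)

theorem eventually_add_coe_mul_le_iff {c : TT} (hc : c ≠ ⊥) (s t : ℝ) :
    (∀ᶠ l : ℝ in 𝓝[≥] 0, c + ((l * s : ℝ) : TT) ≤ c + ((l * t : ℝ) : TT)) ↔ s ≤ t := by
  lift c to ℝ using hc
  norm_cast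
  simp only [add_le_add_iff_left]
  constructor
  · intro h
    obtain ⟨l, hle, hpos⟩ :=
      ((h.filter_mono (nhdsWithin_mono 0 Set.Ioi_subset_Ici_self)).and self_mem_nhdsWithin).exists
    exact le_of_mul_le_mul_left hle hpos
  · intro hst
    filter_upwards [self_mem_nhdsWithin] with l hl
    exact mul_le_mul_of_nonneg_left hst hl

theorem add_le_tdot (a x : Fin n → TT) (j : Fin n) : a j + x j ≤ tdot a x :=
  Finset.le_sup (f := fun j => a j + x j) (Finset.mem_univ j)

theorem tdot_mono (a : Fin n → TT) : Monotone (tdot a) := fun _ _ hxy =>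
  Finset.sup_mono_fun fun j _ => add_le_add_right (hxy j) (a j)

theorem tdot_add_const (a x : Fin n → TT) (c : TT) :
    tdot a (fun j => x j + c) = tdot a x + c := by
  simp only [tdot, ← add_assoc]
  exact (Finset.apply_sup_eq_sup_comp_of_linearOrder (fun u : TT => u + c)
    (fun _ _ h => add_le_add_left h c) (WithBot.bot_add c)).symm

theorem tdot_toT_eq_bot_iff (a : Fin (n + 1) → TT) (x : Fin (n + 1) → ℝ) :
    tdot a (toT x) = ⊥ ↔ ∀ j, a j = ⊥ := by
  simp [tdot, toT, Finset.sup_eq_bot_iff]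

theorem tdot_ne_bot_of_tdot_eq {a b : Fin (n + 1) → TT} {x : Fin (n + 1) → ℝ}
    (hab : ∃ j, max (a j) (b j) ≠ ⊥) (heq : tdot a (toT x) = tdot b (toT x)) :
    tdot a (toT x) ≠ ⊥ := by
  intro hbot
  obtain ⟨j, hj⟩ := hab
  have haj : a j = ⊥ := (tdot_toT_eq_bot_iff a x).mp hbot j
  have hbj : b j = ⊥ := (tdot_toT_eq_bot_iff b x).mp (heq ▸ hbot) j
  exact hj (by rw [haj, hbj, max_self])

theorem toT_add_smul_eJ_of_mem {J : Finset (Fin (n + 1))} {j : Fin (n + 1)} (hj : j ∈ J)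
    (x : Fin (n + 1) → ℝ) (l : ℝ) : toT (x + l • eJ J) j = toT x j + (l : TT) := by
  simp [toT, eJ, hj]

theorem toT_add_smul_eJ_of_notMem {J : Finset (Fin (n + 1))} {j : Fin (n + 1)} (hj : j ∉ J)
    (x : Fin (n + 1) → ℝ) (l : ℝ) : toT (x + l • eJ J) j = toT x j := by
  simp [toT, eJ, hj]

section Ray

variable (a : Fin (n + 1) → TT) (x : Fin (n + 1) → ℝ) (J : Finset (Fin (n + 1)))

theorem tdot_le_tdot_add_smul_eJ {l : ℝ} (hl : 0 ≤ l) :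
    tdot a (toT x) ≤ tdot a (toT (x + l • eJ J)) := by
  refine tdot_mono a fun j => WithBot.coe_le_coe.mpr ?_
  by_cases hj : j ∈ J <;> simp [eJ, hj, hl]

theorem tdot_add_smul_eJ_le {l : ℝ} (hl : 0 ≤ l) :
    tdot a (toT (x + l • eJ J)) ≤ tdot a (toT x) + (l : TT) := by
  rw [← tdot_add_const]
  refine tdot_mono a fun j => ?_
  simp only [toT]
  norm_cast
  by_cases hj : j ∈ J <;> simp [eJ, hj, hl]

/-- The slope at `l = 0⁺` of `l ↦ a ⊙ (x + l e^J)`, that is, the one-sided directional derivative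
of the tropical linear form `a` at `x` along `e^J`. It is given by its explicit value, according to
whether `J` meets the set of indices attaining the maximum `a ⊙ x`; if `a ⊙ x = −∞`, the value
carries no meaning. -/
def tdotSlope : ℝ :=
  if ∃ j ∈ J, a j + toT x j = tdot a (toT x) then 1 else 0

variable {a x J}

theorem tdot_add_smul_eJ_of_exists_eq (h : ∃ j ∈ J, a j + toT x j = tdot a (toT x)) {l : ℝ}
    (hl : 0 ≤ l) : tdot a (toT (x + l • eJ J)) = tdot a (toT x) + (l : TT) := by
  obtain ⟨j, hj, hmax⟩ := h
  refine le_antisymm (tdot_add_smul_eJ_le a x J hl) ?_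
  calc tdot a (toT x) + (l : TT)
      = a j + toT (x + l • eJ J) j := by rw [← hmax, toT_add_smul_eJ_of_mem hj, add_assoc]
    _ ≤ tdot a (toT (x + l • eJ J)) := add_le_tdot a _ j

theorem eventually_tdot_add_smul_eJ_eq_self (h : ∀ j ∈ J, a j + toT x j ≠ tdot a (toT x)) :
    ∀ᶠ l : ℝ in 𝓝[≥] 0, tdot a (toT (x + l • eJ J)) = tdot a (toT x) := by
  have hgap : ∀ᶠ l : ℝ in 𝓝 0, ∀ j ∈ J, a j + toT x j + (l : TT) < tdot a (toT x) :=
    (eventually_all_finset J).mpr fun j hj =>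
      eventually_add_coe_lt ((add_le_tdot a (toT x) j).lt_of_ne (h j hj))
  filter_upwards [self_mem_nhdsWithin, nhdsWithin_le_nhds hgap] with l hl hlt
  refine le_antisymm (Finset.sup_le fun j _ => ?_) (tdot_le_tdot_add_smul_eJ a x J hl)
  by_cases hj : j ∈ J
  · rw [toT_add_smul_eJ_of_mem hj, ← add_assoc]
    exact (hlt j hj).le
  · rw [toT_add_smul_eJ_of_notMem hj]
    exact add_le_tdot a (toT x) j

variable (a x J)

theorem eventually_tdot_add_smul_eJ :
    ∀ᶠ l : ℝ in 𝓝[≥] 0,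
      tdot a (toT (x + l • eJ J)) = tdot a (toT x) + ((l * tdotSlope a x J : ℝ) : TT) := by
  by_cases h : ∃ j ∈ J, a j + toT x j = tdot a (toT x)
  · filter_upwards [self_mem_nhdsWithin] with l hl
    simpa [tdotSlope, h] using tdot_add_smul_eJ_of_exists_eq h hl
  · simpa [tdotSlope, h] using eventually_tdot_add_smul_eJ_eq_self (by simpa using h)

end Ray

theorem tdotSlope_le_tdotSlope_iff (a b : Fin (n + 1) → TT) (x : Fin (n + 1) → ℝ)
    (J : Finset (Fin (n + 1))) :
    tdotSlope b x J ≤ tdotSlope a x J ↔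
      (∃ j ∈ J, a j + toT x j = tdot a (toT x)) ∨ ∀ j ∈ J, b j + toT x j ≠ tdot b (toT x) := by
  have hmiss : (∀ j ∈ J, b j + toT x j ≠ tdot b (toT x)) ↔
      ¬∃ j ∈ J, b j + toT x j = tdot b (toT x) := by simp
  rw [hmiss, tdotSlope, tdotSlope]
  split_ifs <;> simp [*]

theorem feasible_iff_eventually {D : Set (Fin (n + 1) → TT)} {x : Fin (n + 1) → ℝ}
    {J : Finset (Fin (n + 1))} :
    Feasible D x J ↔
      J ≠ ∅ ∧ J ≠ Finset.univ ∧ ∀ᶠ l : ℝ in 𝓝[≥] 0, toT (x + l • eJ J) ∈ D := by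
  simp only [Feasible, Filter.Eventually, mem_nhdsGE_iff_exists_Icc_subset, Set.subset_def,
    Set.mem_Icc, Set.mem_ofPred_eq, and_imp]

theorem feasible_inter_iff {D E : Set (Fin (n + 1) → TT)} {x : Fin (n + 1) → ℝ}
    {J : Finset (Fin (n + 1))} :
    Feasible (D ∩ E) x J ↔ Feasible D x J ∧ Feasible E x J := by
  simp only [feasible_iff_eventually, Set.mem_inter_iff, eventually_and]
  tauto

theorem hypHS_eq_halfHS_inter_halfHS (Wp Wn : Fin m → Fin (n + 1) → TT) (i : Fin m) :
    hypHS Wp Wn i = halfHS Wp Wn i ∩ halfHS Wn Wp i := by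
  ext y
  exact le_antisymm_iff.trans and_comm

variable {Wp Wn : Fin m → Fin (n + 1) → TT} {i : Fin m} {x : Fin (n + 1) → ℝ}
  {J : Finset (Fin (n + 1))}

theorem feasible_halfHS_of_tdot_lt (hJne : J ≠ ∅) (hJuniv : J ≠ Finset.univ)
    (hlt : tdot (Wn i) (toT x) < tdot (Wp i) (toT x)) : Feasible (halfHS Wp Wn i) x J := by
  refine feasible_iff_eventually.mpr ⟨hJne, hJuniv, ?_⟩
  filter_upwards [self_mem_nhdsWithin, nhdsWithin_le_nhds (eventually_add_coe_lt hlt)]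
    with l hl hlt_add
  calc tdot (Wn i) (toT (x + l • eJ J))
      ≤ tdot (Wn i) (toT x) + (l : TT) := tdot_add_smul_eJ_le _ _ _ hl
    _ ≤ tdot (Wp i) (toT x) := hlt_add.le
    _ ≤ tdot (Wp i) (toT (x + l • eJ J)) := tdot_le_tdot_add_smul_eJ _ _ _ hl

theorem feasible_halfHS_iff (hJne : J ≠ ∅) (hJuniv : J ≠ Finset.univ)
    (heq : tdot (Wp i) (toT x) = tdot (Wn i) (toT x)) (hbot : tdot (Wp i) (toT x) ≠ ⊥) :
    Feasible (halfHS Wp Wn i) x J ↔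
      (∃ j ∈ J, j ∈ argmaxP Wp i x) ∨ ∀ j ∈ J, j ∉ argmaxM Wn i x := by
  calc Feasible (halfHS Wp Wn i) x J
      ↔ ∀ᶠ l : ℝ in 𝓝[≥] 0,
          tdot (Wn i) (toT (x + l • eJ J)) ≤ tdot (Wp i) (toT (x + l • eJ J)) := by
        simp [feasible_iff_eventually, halfHS, hJne, hJuniv]
    _ ↔ ∀ᶠ l : ℝ in 𝓝[≥] 0,
          tdot (Wp i) (toT x) + ((l * tdotSlope (Wn i) x J : ℝ) : TT) ≤
            tdot (Wp i) (toT x) + ((l * tdotSlope (Wp i) x J : ℝ) : TT) := by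
        refine eventually_congr ?_
        filter_upwards [eventually_tdot_add_smul_eJ (Wp i) x J,
          eventually_tdot_add_smul_eJ (Wn i) x J] with l hp hn
        rw [hp, hn, heq]
    _ ↔ tdotSlope (Wn i) x J ≤ tdotSlope (Wp i) x J := eventually_add_coe_mul_le_iff hbot _ _
    _ ↔ _ := tdotSlope_le_tdotSlope_iff _ _ _ _

theorem feasible_hypHS_iff (hJne : J ≠ ∅) (hJuniv : J ≠ Finset.univ)
    (heq : tdot (Wp i) (toT x) = tdot (Wn i) (toT x)) (hbot : tdot (Wp i) (toT x) ≠ ⊥) :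
    Feasible (hypHS Wp Wn i) x J ↔
      ((∀ j ∈ J, j ∉ argmaxP Wp i x) ∧ ∀ j ∈ J, j ∉ argmaxM Wn i x) ∨
        ((∃ j ∈ J, j ∈ argmaxP Wp i x) ∧ ∃ j ∈ J, j ∈ argmaxM Wn i x) := by
  have hge : Feasible (halfHS Wn Wp i) x J ↔
      (∃ j ∈ J, j ∈ argmaxM Wn i x) ∨ ∀ j ∈ J, j ∉ argmaxP Wp i x :=
    feasible_halfHS_iff hJne hJuniv heq.symm (heq ▸ hbot)
  rw [hypHS_eq_halfHS_inter_halfHS, feasible_inter_iff, hge,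
    feasible_halfHS_iff hJne hJuniv heq hbot]
  grind

end

theorem stmt10_general {m n : ℕ} (Wp Wn : Fin m → Fin (n + 1) → TT) (i : Fin m)
    (hrow : ∃ j, max (Wp i j) (Wn i j) ≠ ⊥) (x : Fin (n + 1) → ℝ) (J : Finset (Fin (n + 1)))
    (hJne : J ≠ ∅) (hJuniv : J ≠ Finset.univ) :
    (tdot (Wn i) (toT x) < tdot (Wp i) (toT x) →
      Feasible (halfHS Wp Wn i) x J) ∧
    (tdot (Wp i) (toT x) = tdot (Wn i) (toT x) →
      (Feasible (halfHS Wp Wn i) x J ↔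
        ((∃ j ∈ J, j ∈ argmaxP Wp i x) ∨ ∀ j ∈ J, j ∉ argmaxM Wn i x))) ∧
    (tdot (Wp i) (toT x) = tdot (Wn i) (toT x) →
      (Feasible (hypHS Wp Wn i) x J ↔
        (((∀ j ∈ J, j ∉ argmaxP Wp i x) ∧ ∀ j ∈ J, j ∉ argmaxM Wn i x) ∨
         ((∃ j ∈ J, j ∈ argmaxP Wp i x) ∧ ∃ j ∈ J, j ∈ argmaxM Wn i x)))) :=
  ⟨feasible_halfHS_of_tdot_lt hJne hJuniv,
    fun heq => feasible_halfHS_iff hJne hJuniv heq (tdot_ne_bot_of_tdot_eq hrow heq),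
    fun heq => feasible_hypHS_iff hJne hJuniv heq (tdot_ne_bot_of_tdot_eq hrow heq)⟩

/-- Feasibility of a direction `e^J` (with `∅ ⊊ J ⊊ [n+1]`)
from a finite point `x`: (i) in the open half-space every direction is
feasible; (ii) on the s-hyperplane, feasibility in `Hᵢ^≥` holds iff
`argmax(Wᵢ⁺⊙x) ∩ J ≠ ∅` or `argmax(Wᵢ⁻⊙x) ∩ J = ∅`; (iii) feasibility in `Hᵢ`
holds iff the two intersections are both empty or both nonempty. -/
theorem stmt10 {m n : ℕ} (Wp Wn : Fin m → Fin (n + 1) → TT)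
    (hsign : ∀ i j, min (Wp i j) (Wn i j) = ⊥)
    (hrow : ∀ i, ∃ j, max (Wp i j) (Wn i j) ≠ ⊥)
    (i : Fin m) (x : Fin (n + 1) → ℝ) (J : Finset (Fin (n + 1)))
    (hJne : J ≠ ∅) (hJuniv : J ≠ Finset.univ) :
    (tdot (Wn i) (toT x) < tdot (Wp i) (toT x) →
      Feasible (halfHS Wp Wn i) x J) ∧
    (tdot (Wp i) (toT x) = tdot (Wn i) (toT x) →
      (Feasible (halfHS Wp Wn i) x J ↔
        ((∃ j ∈ J, j ∈ argmaxP Wp i x) ∨ ∀ j ∈ J, j ∉ argmaxM Wn i x))) ∧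
    (tdot (Wp i) (toT x) = tdot (Wn i) (toT x) →
      (Feasible (hypHS Wp Wn i) x J ↔
        (((∀ j ∈ J, j ∉ argmaxP Wp i x) ∧ ∀ j ∈ J, j ∉ argmaxM Wn i x) ∨
         ((∃ j ∈ J, j ∈ argmaxP Wp i x) ∧ ∃ j ∈ J, j ∈ argmaxM Wn i x)))) :=
  stmt10_general Wp Wn i (hrow i) x J hJne hJuniv
end
end
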